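/- (Theorem 3.1.) Let (ρ, u) be a smooth (C^∞) solution of the steady isentropic compressible Euler equations on U with ρ > 0 and u₁ > 0 everywhere. Then the quantity W satisfies D(W/(ρG)) + (c²(ρ)/(2ρ²(B − h(ρ))²)) · [(1, β₂, β₃)·(∇ρ × ∇B)] = 0 on U, where ∇ρ × ∇B denotes the cross product of the gradients of ρ and B. (Note B − h(ρ) = |u|²/2 > 0 since u₁ > 0.) In particular, if B is constant on U then D(W/(ρG)) = 0. -/

import Mathlib

/-- Partial derivative in direction `i` of a scalar function on `ℝ³`. -/
noncomputable def pd (i : Fin 3) (f : (Fin 3 → ℝ) → ℝ) (x : Fin 3 → ℝ) : ℝ :=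
  fderiv ℝ f x (Pi.single i 1)

/-- The operator `D = ∂₁ + β₂ ∂₂ + β₃ ∂₃`. -/
noncomputable def Dop (β₂ β₃ : (Fin 3 → ℝ) → ℝ) (f : (Fin 3 → ℝ) → ℝ) (x : Fin 3 → ℝ) : ℝ :=
  pd 0 f x + β₂ x * pd 1 f x + β₃ x * pd 2 f x

/-!
Write `v` for the velocity and `ω = curl v`. The momentum equation in Lamb form says
`∇B = v × ω`, so `ω` splits along and across the flow as
`ω = m ρ v + |v|⁻² ∇B × v` with `m = v · ω / (ρ |v|²)`.
Take the divergence. The left side is zero. By conservation of mass the first term on the right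
contributes `ρ v · ∇m`. Since `curl ∇B = 0` and `∇B · ω = 0`, the second contributes only
`∇(|v|⁻²) · (∇B × v)`, and `|v|² = 2 (B - h)` turns this into a multiple of `v · (∇ρ × ∇B)`.

The ratio `m` does not change when `v` is rescaled by a scalar field, because
`f v · curl (f v) = f² v · curl v`. For the rescaling `v / u₁ = (1, β₂, β₃)` it is `W / (ρ G)`.
-/

open Filter
open scoped Matrix Topology

/-- The gradient of a scalar field on `ℝ³`, as a coordinate vector. Mathlib's `gradient` requires
an inner product space, which `Fin 3 → ℝ` is not. -/
noncomputable def grad (f : (Fin 3 → ℝ) → ℝ) (x : Fin 3 → ℝ) : Fin 3 → ℝ :=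
  fun i => pd i f x

/-- The divergence of a vector field on `ℝ³`. -/
noncomputable def divergence (v : (Fin 3 → ℝ) → Fin 3 → ℝ) (x : Fin 3 → ℝ) : ℝ :=
  ∑ i, pd i (fun y => v y i) x

/-- The curl of a vector field on `ℝ³`. -/
noncomputable def curl (v : (Fin 3 → ℝ) → Fin 3 → ℝ) (x : Fin 3 → ℝ) : Fin 3 → ℝ :=
  ![pd 1 (fun y => v y 2) x - pd 2 (fun y => v y 1) x,
    pd 2 (fun y => v y 0) x - pd 0 (fun y => v y 2) x,
    pd 0 (fun y => v y 1) x - pd 1 (fun y => v y 0) x]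

section PartialDerivatives

variable {f g : (Fin 3 → ℝ) → ℝ} {x : Fin 3 → ℝ} {i : Fin 3}

theorem pd_congr (h : f =ᶠ[𝓝 x] g) : pd i f x = pd i g x := by
  simp only [pd, h.fderiv_eq]

@[simp]
theorem pd_const (c : ℝ) : pd i (fun _ => c) x = 0 := by
  simp [pd]

theorem pd_add (hf : DifferentiableAt ℝ f x) (hg : DifferentiableAt ℝ g x) :
    pd i (fun y => f y + g y) x = pd i f x + pd i g x := by
  simp [pd, fderiv_fun_add hf hg]

theorem pd_sub (hf : DifferentiableAt ℝ f x) (hg : DifferentiableAt ℝ g x) :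
    pd i (fun y => f y - g y) x = pd i f x - pd i g x := by
  simp [pd, fderiv_fun_sub hf hg]

theorem pd_mul (hf : DifferentiableAt ℝ f x) (hg : DifferentiableAt ℝ g x) :
    pd i (fun y => f y * g y) x = pd i f x * g x + f x * pd i g x := by
  simp [pd, fderiv_fun_mul hf hg, mul_comm, add_comm]

theorem pd_div_const (hf : DifferentiableAt ℝ f x) (c : ℝ) :
    pd i (fun y => f y / c) x = pd i f x / c := by
  simp only [div_eq_mul_inv, pd_mul hf (differentiableAt_const _), pd_const, mul_zero, add_zero]

theorem grad_congr (h : f =ᶠ[𝓝 x] g) : grad f x = grad g x :=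
  funext fun _ => pd_congr h

@[simp]
theorem grad_const (c : ℝ) : grad (fun _ => c) x = 0 :=
  funext fun _ => pd_const c

theorem grad_sub (hf : DifferentiableAt ℝ f x) (hg : DifferentiableAt ℝ g x) :
    grad (fun y => f y - g y) x = grad f x - grad g x :=
  funext fun _ => pd_sub hf hg

theorem grad_comp {φ : ℝ → ℝ} {φ' : ℝ} (hφ : HasDerivAt φ φ' (f x))
    (hf : DifferentiableAt ℝ f x) : grad (fun y => φ (f y)) x = φ' • grad f x := by
  have h : HasFDerivAt (fun y => φ (f y)) (φ' • fderiv ℝ f x) x :=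
    hφ.comp_hasFDerivAt x hf.hasFDerivAt
  funext i
  simp [grad, pd, h.fderiv]

theorem fderiv_eq_sum_grad_smul_proj (f : (Fin 3 → ℝ) → ℝ) :
    fderiv ℝ f = fun y => ∑ i, grad f y i • ContinuousLinearMap.proj (R := ℝ) i := by
  funext y
  ext e
  conv_lhs => rw [pi_eq_sum_univ' e, map_sum]
  simp [grad, pd, mul_comm]

theorem differentiableAt_fderiv_of_grad (hf : DifferentiableAt ℝ (grad f) x) :
    DifferentiableAt ℝ (fderiv ℝ f) x := by
  rw [fderiv_eq_sum_grad_smul_proj]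
  fun_prop

theorem differentiableAt_pd (hf : ContDiffAt ℝ 2 f x) : DifferentiableAt ℝ (pd i f) x :=
  ((hf.fderiv_right (m := 1) le_rfl).differentiableAt one_ne_zero).clm_apply
    (differentiableAt_const _)

theorem differentiableAt_grad (hf : ContDiffAt ℝ 2 f x) : DifferentiableAt ℝ (grad f) x :=
  differentiableAt_pi.2 fun _ => differentiableAt_pd hf

theorem pd_pd_eq_fderiv_fderiv (hf : DifferentiableAt ℝ (grad f) x) (i j : Fin 3) :
    pd i (pd j f) x = fderiv ℝ (fderiv ℝ f) x (Pi.single i 1) (Pi.single j 1) := by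
  change fderiv ℝ (fun y => fderiv ℝ f y (Pi.single j 1)) x (Pi.single i 1) = _
  simp [fderiv_clm_apply (differentiableAt_fderiv_of_grad hf) (differentiableAt_const _)]

theorem pd_pd_comm (hf : ∀ᶠ y in 𝓝 x, DifferentiableAt ℝ f y)
    (hf' : DifferentiableAt ℝ (grad f) x) (i j : Fin 3) :
    pd i (pd j f) x = pd j (pd i f) x := by
  rw [pd_pd_eq_fderiv_fderiv hf', pd_pd_eq_fderiv_fderiv hf']
  exact second_derivative_symmetric_of_eventually (hf.mono fun _ hy => hy.hasFDerivAt)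
    (differentiableAt_fderiv_of_grad hf').hasFDerivAt _ _

theorem pd_pd_comm_of_contDiffAt (hf : ContDiffAt ℝ 2 f x) (i j : Fin 3) :
    pd i (pd j f) x = pd j (pd i f) x :=
  pd_pd_comm ((hf.eventually (by simp)).mono fun _ hy => hy.differentiableAt two_ne_zero)
    (differentiableAt_grad hf) i j

end PartialDerivatives

section VectorCalculus

variable {f : (Fin 3 → ℝ) → ℝ} {v w : (Fin 3 → ℝ) → Fin 3 → ℝ} {x : Fin 3 → ℝ}

theorem differentiableAt_dotProduct (hv : DifferentiableAt ℝ v x) (hw : DifferentiableAt ℝ w x) :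
    DifferentiableAt ℝ (fun y => v y ⬝ᵥ w y) x := by
  simp only [dotProduct]
  fun_prop

theorem differentiableAt_half_dotProduct_self (hv : DifferentiableAt ℝ v x) :
    DifferentiableAt ℝ (fun y => v y ⬝ᵥ v y / 2) x := by
  have hvv := differentiableAt_dotProduct hv hv
  fun_prop

theorem differentiableAt_cross (hv : DifferentiableAt ℝ v x) (hw : DifferentiableAt ℝ w x) :
    DifferentiableAt ℝ (fun y => v y ⨯₃ w y) x := by
  rw [differentiableAt_pi] at hv hw
  have hminor (i j : Fin 3) : DifferentiableAt ℝ (fun y => v y i * w y j - v y j * w y i) x :=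
    ((hv i).fun_mul (hw j)).fun_sub ((hv j).fun_mul (hw i))
  refine differentiableAt_pi.2 fun i => ?_
  fin_cases i
  exacts [hminor 1 2, hminor 2 0, hminor 0 1]

theorem differentiableAt_curl (hv : ContDiffAt ℝ 2 v x) : DifferentiableAt ℝ (curl v) x := by
  have hpd (i j : Fin 3) : DifferentiableAt ℝ (pd i fun y => v y j) x :=
    differentiableAt_pd (contDiffAt_pi.1 hv j)
  refine differentiableAt_pi.2 fun i => ?_
  fin_cases i
  exacts [(hpd 1 2).sub (hpd 2 1), (hpd 2 0).sub (hpd 0 2), (hpd 0 1).sub (hpd 1 0)]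

theorem divergence_congr (h : v =ᶠ[𝓝 x] w) : divergence v x = divergence w x :=
  Finset.sum_congr rfl fun i _ => pd_congr (h.fun_comp (· i))

theorem divergence_add (hv : DifferentiableAt ℝ v x) (hw : DifferentiableAt ℝ w x) :
    divergence (fun y => v y + w y) x = divergence v x + divergence w x := by
  rw [differentiableAt_pi] at hv hw
  simp only [divergence, Pi.add_apply, pd_add (hv _) (hw _), Finset.sum_add_distrib]

theorem divergence_smul (hf : DifferentiableAt ℝ f x) (hv : DifferentiableAt ℝ v x) :
    divergence (fun y => f y • v y) x = grad f x ⬝ᵥ v x + f x * divergence v x := by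
  rw [differentiableAt_pi] at hv
  simp only [divergence, grad, dotProduct, Pi.smul_apply, smul_eq_mul, pd_mul hf (hv _),
    Finset.sum_add_distrib, Finset.mul_sum]

theorem divergence_cross (hv : DifferentiableAt ℝ v x) (hw : DifferentiableAt ℝ w x) :
    divergence (fun y => v y ⨯₃ w y) x = curl v x ⬝ᵥ w x - v x ⬝ᵥ curl w x := by
  rw [differentiableAt_pi] at hv hw
  have hpd (i j k : Fin 3) :
      pd i (fun y => v y j * w y k - v y k * w y j) x =
        pd i (fun y => v y j) x * w x k + v x j * pd i (fun y => w y k) x -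
          (pd i (fun y => v y k) x * w x j + v x k * pd i (fun y => w y j) x) := by
    rw [pd_sub ((hv j).fun_mul (hw k)) ((hv k).fun_mul (hw j)), pd_mul (hv j) (hw k),
      pd_mul (hv k) (hw j)]
  simp only [divergence, curl, cross_apply, Matrix.vec3_dotProduct, Fin.sum_univ_three,
    Matrix.cons_val, hpd]
  ring

theorem divergence_curl (hv : ContDiffAt ℝ 2 v x) : divergence (curl v) x = 0 := by
  have hv' := contDiffAt_pi.1 hv
  have hpd (i j k l m : Fin 3) :
      pd i (fun y => pd j (fun z => v z k) y - pd l (fun z => v z m) y) x =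
        pd i (pd j fun z => v z k) x - pd i (pd l fun z => v z m) x :=
    pd_sub (differentiableAt_pd (hv' k)) (differentiableAt_pd (hv' m))
  simp only [divergence, curl, Fin.sum_univ_three, Matrix.cons_val, hpd,
    pd_pd_comm_of_contDiffAt (hv' _) 1 0, pd_pd_comm_of_contDiffAt (hv' _) 2 0,
    pd_pd_comm_of_contDiffAt (hv' _) 2 1]
  ring

theorem curl_congr (h : v =ᶠ[𝓝 x] w) : curl v x = curl w x := by
  have hpd (i j : Fin 3) : pd i (fun y => v y j) x = pd i (fun y => w y j) x :=
    pd_congr (h.fun_comp (· j))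
  simp only [curl, hpd]

theorem curl_grad (hf : ∀ᶠ y in 𝓝 x, DifferentiableAt ℝ f y)
    (hf' : DifferentiableAt ℝ (grad f) x) : curl (grad f) x = 0 := by
  have hpd (i j : Fin 3) : pd i (fun y => grad f y j) x - pd j (fun y => grad f y i) x = 0 :=
    sub_eq_zero.2 (pd_pd_comm hf hf' i j)
  simp [curl, hpd]

theorem curl_smul (hf : DifferentiableAt ℝ f x) (hv : DifferentiableAt ℝ v x) :
    curl (fun y => f y • v y) x = f x • curl v x + grad f x ⨯₃ v x := by
  rw [differentiableAt_pi] at hv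
  ext i
  fin_cases i <;>
    simp only [Fin.zero_eta, Fin.mk_one, Fin.reduceFinMk, curl, grad, cross_apply, Pi.add_apply,
      Pi.smul_apply, smul_eq_mul, pd_mul hf (hv _), Matrix.cons_val] <;>
    ring

theorem smul_dotProduct_curl_smul (hf : DifferentiableAt ℝ f x) (hv : DifferentiableAt ℝ v x) :
    f x • v x ⬝ᵥ curl (fun y => f y • v y) x = f x ^ 2 * (v x ⬝ᵥ curl v x) := by
  rw [curl_smul hf hv, dotProduct_add, smul_dotProduct, smul_dotProduct, dot_cross_self,
    dotProduct_smul, smul_zero, add_zero, smul_smul, smul_eq_mul, sq]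

theorem pd_half_dotProduct_self (hv : DifferentiableAt ℝ v x) (i : Fin 3) :
    pd i (fun y => v y ⬝ᵥ v y / 2) x = ∑ j, v x j * pd i (fun y => v y j) x := by
  rw [pd_div_const (differentiableAt_dotProduct hv hv)]
  rw [differentiableAt_pi] at hv
  simp only [Matrix.vec3_dotProduct, Fin.sum_univ_three]
  rw [pd_add (by fun_prop) (by fun_prop), pd_add (by fun_prop) (by fun_prop)]
  simp only [pd_mul (hv _) (hv _)]
  ring

theorem dotProduct_grad_apply (hv : DifferentiableAt ℝ v x) (i : Fin 3) :
    v x ⬝ᵥ grad (fun y => v y i) x =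
      pd i (fun y => v y ⬝ᵥ v y / 2) x - (v x ⨯₃ curl v x) i := by
  rw [pd_half_dotProduct_self hv]
  fin_cases i <;>
    simp only [Fin.zero_eta, Fin.mk_one, Fin.reduceFinMk, Matrix.vec3_dotProduct, grad,
      Fin.sum_univ_three, curl, cross_apply, Matrix.cons_val] <;>
    ring

end VectorCalculus

section StreamwiseVorticity

/-- The coefficient of the momentum `ρ v` in the orthogonal projection of `curl v` to the line
spanned by `v`. -/
noncomputable def streamwiseVorticity (ρ : (Fin 3 → ℝ) → ℝ) (v : (Fin 3 → ℝ) → Fin 3 → ℝ)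
    (x : Fin 3 → ℝ) : ℝ :=
  v x ⬝ᵥ curl v x / (ρ x * (v x ⬝ᵥ v x))

variable {ρ B f : (Fin 3 → ℝ) → ℝ} {v w : (Fin 3 → ℝ) → Fin 3 → ℝ} {x : Fin 3 → ℝ}

theorem differentiableAt_streamwiseVorticity (hρ : DifferentiableAt ℝ ρ x) (hρ0 : ρ x ≠ 0)
    (hv : ContDiffAt ℝ 2 v x) (hv0 : v x ≠ 0) :
    DifferentiableAt ℝ (streamwiseVorticity ρ v) x := by
  have hv' := hv.differentiableAt two_ne_zero
  have hnum := differentiableAt_dotProduct hv' (differentiableAt_curl hv)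
  have hden := differentiableAt_dotProduct hv' hv'
  have hden0 : ρ x * (v x ⬝ᵥ v x) ≠ 0 := mul_ne_zero hρ0 (dotProduct_self_eq_zero.not.2 hv0)
  unfold streamwiseVorticity
  fun_prop (disch := assumption)

theorem streamwiseVorticity_congr (h : v =ᶠ[𝓝 x] w) :
    streamwiseVorticity ρ v x = streamwiseVorticity ρ w x := by
  simp only [streamwiseVorticity, curl_congr h, h.eq_of_nhds]

theorem streamwiseVorticity_smul (hf : DifferentiableAt ℝ f x) (hf0 : f x ≠ 0)
    (hv : DifferentiableAt ℝ v x) :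
    streamwiseVorticity ρ (fun y => f y • v y) x = streamwiseVorticity ρ v x := by
  simp only [streamwiseVorticity, smul_dotProduct_curl_smul hf hv, smul_dotProduct,
    dotProduct_smul, smul_eq_mul]
  rw [← mul_div_mul_left (v x ⬝ᵥ curl v x) _ (pow_ne_zero 2 hf0)]
  ring

theorem curl_eq_streamwiseVorticity_smul_add (hρ : ρ x ≠ 0) (hv : v x ≠ 0) :
    curl v x = streamwiseVorticity ρ v x • ρ x • v x +
      (v x ⬝ᵥ v x)⁻¹ • (v x ⨯₃ curl v x) ⨯₃ v x := by
  have hvv : v x ⬝ᵥ v x ≠ 0 := dotProduct_self_eq_zero.not.2 hv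
  rw [cross_cross_eq_smul_sub_smul, dotProduct_comm (curl v x)]
  ext i
  simp only [streamwiseVorticity, Pi.add_apply, Pi.sub_apply, Pi.smul_apply, smul_eq_mul]
  field_simp
  ring

theorem mul_dotProduct_grad_streamwiseVorticity (hρ : DifferentiableAt ℝ ρ x) (hρ0 : ρ x ≠ 0)
    (hv : ContDiffAt ℝ 2 v x) (hv0 : v x ≠ 0) (hB : ∀ᶠ y in 𝓝 x, DifferentiableAt ℝ B y)
    (hmass : divergence (fun y => ρ y • v y) x = 0)
    (hlamb : grad B =ᶠ[𝓝 x] fun y => v y ⨯₃ curl v y) :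
    ρ x * (v x ⬝ᵥ grad (streamwiseVorticity ρ v) x) =
      -(grad (fun y => (v y ⬝ᵥ v y)⁻¹) x ⬝ᵥ grad B x ⨯₃ v x) := by
  have hv' := hv.differentiableAt two_ne_zero
  have hcurl := differentiableAt_curl hv
  have hsv := differentiableAt_streamwiseVorticity hρ hρ0 hv hv0
  -- The second derivatives of `B` come from `v × curl v`, not from the density and the enthalpy.
  have hgrad : DifferentiableAt ℝ (grad B) x :=
    (differentiableAt_cross hv' hcurl).congr_of_eventuallyEq hlamb
  have hinv : DifferentiableAt ℝ (fun y => (v y ⬝ᵥ v y)⁻¹) x :=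
    (differentiableAt_dotProduct hv' hv').fun_inv (dotProduct_self_eq_zero.not.2 hv0)
  have hsplit : curl v =ᶠ[𝓝 x] fun y =>
      streamwiseVorticity ρ v y • ρ y • v y + (v y ⬝ᵥ v y)⁻¹ • grad B y ⨯₃ v y := by
    filter_upwards [hρ.continuousAt.eventually_ne hρ0, hv'.continuousAt.eventually_ne hv0, hlamb]
      with y hρy hvy hBy
    rw [hBy]
    exact curl_eq_streamwiseVorticity_smul_add hρy hvy
  have halong : divergence (fun y => streamwiseVorticity ρ v y • ρ y • v y) x =
      ρ x * (v x ⬝ᵥ grad (streamwiseVorticity ρ v) x) := by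
    rw [divergence_smul hsv (hρ.fun_smul hv'), hmass, dotProduct_smul, dotProduct_comm]
    simp
  have hacross : divergence (fun y => (v y ⬝ᵥ v y)⁻¹ • grad B y ⨯₃ v y) x =
      grad (fun y => (v y ⬝ᵥ v y)⁻¹) x ⬝ᵥ grad B x ⨯₃ v x := by
    have horth : grad B x ⬝ᵥ curl v x = 0 := by
      rw [hlamb.eq_of_nhds, dotProduct_comm, dot_cross_self]
    rw [divergence_smul hinv (differentiableAt_cross hgrad hv'), divergence_cross hgrad hv',
      curl_grad hB hgrad, horth]
    simp
  rw [eq_neg_iff_add_eq_zero, ← halong, ← hacross, ← divergence_add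
    (hsv.fun_smul (hρ.fun_smul hv')) (hinv.fun_smul (differentiableAt_cross hgrad hv')),
    ← divergence_congr hsplit, divergence_curl hv]

end StreamwiseVorticity

section SteadyEuler

/-- The steady compressible Euler equations on `U` in conservation form, for density `ρ`, pressure
field `P` and velocity `v`. -/
structure IsSteadyEulerFlow (U : Set (Fin 3 → ℝ)) (ρ P : (Fin 3 → ℝ) → ℝ)
    (v : (Fin 3 → ℝ) → Fin 3 → ℝ) : Prop where
  mass : ∀ x ∈ U, divergence (fun y => ρ y • v y) x = 0
  momentum : ∀ x ∈ U, ∀ i, divergence (fun y => (ρ y * v y i) • v y) x + pd i P x = 0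

/-- The Bernoulli function of a flow with velocity `v` and enthalpy field `η`. -/
noncomputable def bernoulliFunction (η : (Fin 3 → ℝ) → ℝ) (v : (Fin 3 → ℝ) → Fin 3 → ℝ)
    (x : Fin 3 → ℝ) : ℝ :=
  v x ⬝ᵥ v x / 2 + η x

variable {U : Set (Fin 3 → ℝ)} {ρ P η : (Fin 3 → ℝ) → ℝ} {v : (Fin 3 → ℝ) → Fin 3 → ℝ}
  {x : Fin 3 → ℝ} {p h c2 : ℝ → ℝ}

theorem differentiableAt_bernoulliFunction (hη : DifferentiableAt ℝ η x)
    (hv : DifferentiableAt ℝ v x) : DifferentiableAt ℝ (bernoulliFunction η v) x :=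
  (differentiableAt_half_dotProduct_self hv).fun_add hη

theorem IsSteadyEulerFlow.mul_dotProduct_grad_apply (hflow : IsSteadyEulerFlow U ρ P v)
    (hx : x ∈ U) (hρ : DifferentiableAt ℝ ρ x) (hv : DifferentiableAt ℝ v x) (i : Fin 3) :
    ρ x * (v x ⬝ᵥ grad (fun y => v y i) x) = -pd i P x := by
  have hmom := hflow.momentum x hx i
  simp only [mul_comm (ρ _), mul_smul] at hmom
  rw [divergence_smul (differentiableAt_pi.1 hv i) (hρ.fun_smul hv), hflow.mass x hx,
    dotProduct_smul, dotProduct_comm, smul_eq_mul, mul_zero, add_zero] at hmom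
  exact eq_neg_of_add_eq_zero_left hmom

theorem IsSteadyEulerFlow.grad_bernoulliFunction (hflow : IsSteadyEulerFlow U ρ P v) (hx : x ∈ U)
    (hρ : DifferentiableAt ℝ ρ x) (hρ0 : ρ x ≠ 0) (hv : DifferentiableAt ℝ v x)
    (hη : DifferentiableAt ℝ η x) (hP : grad P x = ρ x • grad η x) :
    grad (bernoulliFunction η v) x = v x ⨯₃ curl v x := by
  funext i
  have hP' : pd i P x = ρ x * pd i η x := congrFun hP i
  have hconv : v x ⬝ᵥ grad (fun y => v y i) x = -pd i η x := by
    apply mul_left_cancel₀ hρ0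
    rw [hflow.mul_dotProduct_grad_apply hx hρ hv, hP', mul_neg]
  have hsplit : pd i (bernoulliFunction η v) x = pd i (fun y => v y ⬝ᵥ v y / 2) x + pd i η x :=
    pd_add (differentiableAt_half_dotProduct_self hv) hη
  change pd i (bernoulliFunction η v) x = _
  linear_combination hsplit + hconv - dotProduct_grad_apply hv i

theorem hasDerivAt_inv_two_mul {s : ℝ} (hs : s ≠ 0) :
    HasDerivAt (fun t : ℝ => (2 * t)⁻¹) (-(2 * s ^ 2)⁻¹) s := by
  refine ((hasDerivAt_const_mul 2).fun_inv (mul_ne_zero two_ne_zero hs)).congr_deriv ?_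
  field_simp

theorem grad_inv_dotProduct_self (hη : DifferentiableAt ℝ η x) (hv : DifferentiableAt ℝ v x)
    (hv0 : v x ≠ 0) :
    grad (fun y => (v y ⬝ᵥ v y)⁻¹) x =
      (2 * (bernoulliFunction η v x - η x) ^ 2)⁻¹ •
        (grad η x - grad (bernoulliFunction η v) x) := by
  have hkin (y : Fin 3 → ℝ) : v y ⬝ᵥ v y = 2 * (bernoulliFunction η v y - η y) := by
    simp only [bernoulliFunction]
    ring
  have hne : bernoulliFunction η v x - η x ≠ 0 :=
    right_ne_zero_of_mul (hkin x ▸ dotProduct_self_eq_zero.not.2 hv0)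
  have hB := differentiableAt_bernoulliFunction hη hv
  simp only [hkin]
  rw [grad_comp (hasDerivAt_inv_two_mul hne) (hB.fun_sub hη), grad_sub hB hη, neg_smul,
    ← smul_neg, neg_sub]

/-- The barotropic pressure law `p` enters through the squared sound speed `c2 = p'` and the
enthalpy `h`, for which `h' = p' / s`. -/
theorem IsSteadyEulerFlow.dotProduct_grad_streamwiseVorticity
    (hflow : IsSteadyEulerFlow U ρ (fun y => p (ρ y)) v) (hU : IsOpen U) (hx : x ∈ U)
    (hp : ∀ s, 0 < s → HasDerivAt p (c2 s) s) (hh : ∀ s, 0 < s → HasDerivAt h (c2 s / s) s)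
    (hρ : DifferentiableOn ℝ ρ U) (hρpos : ∀ y ∈ U, 0 < ρ y) (hv : ContDiffOn ℝ 2 v U)
    (hv0 : v x ≠ 0) :
    v x ⬝ᵥ grad (streamwiseVorticity ρ v) x =
      -(c2 (ρ x) / (2 * ρ x ^ 2 * (bernoulliFunction (fun y => h (ρ y)) v x - h (ρ x)) ^ 2) *
        (v x ⬝ᵥ grad ρ x ⨯₃ grad (bernoulliFunction (fun y => h (ρ y)) v) x)) := by
  have hρ' {y} (hy : y ∈ U) : DifferentiableAt ℝ ρ y := hρ.differentiableAt (hU.mem_nhds hy)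
  have hv' {y} (hy : y ∈ U) : ContDiffAt ℝ 2 v y := hv.contDiffAt (hU.mem_nhds hy)
  have hvd {y} (hy : y ∈ U) : DifferentiableAt ℝ v y := (hv' hy).differentiableAt two_ne_zero
  have hη {y} (hy : y ∈ U) : DifferentiableAt ℝ (fun z => h (ρ z)) y :=
    (hh _ (hρpos y hy)).differentiableAt.fun_comp' y (hρ' hy)
  have hgradη {y} (hy : y ∈ U) : grad (fun z => h (ρ z)) y = (c2 (ρ y) / ρ y) • grad ρ y :=
    grad_comp (hh _ (hρpos y hy)) (hρ' hy)
  have hgradP {y} (hy : y ∈ U) :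
      grad (fun z => p (ρ z)) y = ρ y • grad (fun z => h (ρ z)) y := by
    rw [grad_comp (hp _ (hρpos y hy)) (hρ' hy), hgradη hy, smul_smul,
      mul_div_cancel₀ _ (hρpos y hy).ne']
  have htransport := mul_dotProduct_grad_streamwiseVorticity
    (B := bernoulliFunction (fun y => h (ρ y)) v) (hρ' hx) (hρpos x hx).ne' (hv' hx) hv0
    ((hU.eventually_mem hx).mono fun y hy => differentiableAt_bernoulliFunction (hη hy) (hvd hy))
    (hflow.mass x hx)
    ((hU.eventually_mem hx).mono fun y hy =>
      hflow.grad_bernoulliFunction hy (hρ' hy) (hρpos y hy).ne' (hvd hy) (hη hy) (hgradP hy))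
  rw [grad_inv_dotProduct_self (hη hx) (hvd hx) hv0, hgradη hx, smul_dotProduct, sub_dotProduct,
    dot_self_cross, sub_zero, smul_dotProduct, ← triple_product_permutation] at htransport
  have hρ0 := (hρpos x hx).ne'
  apply mul_left_cancel₀ hρ0
  rw [htransport, smul_eq_mul, smul_eq_mul]
  field_simp

end SteadyEuler

section Slopes

variable {β₂ β₃ f ρ : (Fin 3 → ℝ) → ℝ} {v : (Fin 3 → ℝ) → Fin 3 → ℝ} {x : Fin 3 → ℝ}

theorem dop_eq_dotProduct_grad : Dop β₂ β₃ f x = ![1, β₂ x, β₃ x] ⬝ᵥ grad f x := by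
  simp only [Dop, grad, Matrix.vec3_dotProduct, Matrix.cons_val, one_mul]

theorem slopes_eq_smul {a : Fin 3 → ℝ} (ha : a 0 ≠ 0) :
    ![1, a 1 / a 0, a 2 / a 0] = (a 0)⁻¹ • a := by
  ext i
  fin_cases i <;> simp [ha, div_eq_inv_mul]

theorem streamwiseVorticity_slopes :
    streamwiseVorticity ρ (fun y => ![1, β₂ y, β₃ y]) x =
      (pd 1 β₃ x - pd 2 β₂ x + β₃ x * pd 0 β₂ x - β₂ x * pd 0 β₃ x) /
        (ρ x * (1 + β₂ x ^ 2 + β₃ x ^ 2)) := by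
  simp only [streamwiseVorticity, curl, Matrix.vec3_dotProduct, Matrix.cons_val, pd_const]
  ring

theorem streamwiseVorticity_eq_of_slopes (hv : DifferentiableAt ℝ v x) (hv0 : v x 0 ≠ 0)
    (hslopes : ∀ᶠ y in 𝓝 x, ![1, β₂ y, β₃ y] = (v y 0)⁻¹ • v y) :
    streamwiseVorticity ρ v x =
      (pd 1 β₃ x - pd 2 β₂ x + β₃ x * pd 0 β₂ x - β₂ x * pd 0 β₃ x) /
        (ρ x * (1 + β₂ x ^ 2 + β₃ x ^ 2)) := by
  rw [← streamwiseVorticity_smul ((differentiableAt_pi.1 hv 0).fun_inv hv0) (inv_ne_zero hv0) hv,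
    ← streamwiseVorticity_congr hslopes, streamwiseVorticity_slopes]

end Slopes

theorem hasDerivAt_rpow_div_self {a s : ℝ} (ha : a ≠ 0) (hs : 0 < s) :
    HasDerivAt (fun t : ℝ => t ^ a / a) (s ^ (a - 1)) s := by
  simpa [ha] using (Real.hasDerivAt_rpow_const (p := a) (Or.inl hs.ne')).div_const a

theorem transport_equation_for_W_general
    {U : Set (Fin 3 → ℝ)} (hU : IsOpen U) {p h c2 : ℝ → ℝ}
    (hp : ∀ s, 0 < s → HasDerivAt p (c2 s) s) (hh : ∀ s, 0 < s → HasDerivAt h (c2 s / s) s)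
    {ρ : (Fin 3 → ℝ) → ℝ} {u : Fin 3 → (Fin 3 → ℝ) → ℝ}
    (hρ : DifferentiableOn ℝ ρ U) (hu : ∀ i, ContDiffOn ℝ 2 (u i) U)
    (hρpos : ∀ x ∈ U, 0 < ρ x) (hu1 : ∀ x ∈ U, u 0 x ≠ 0)
    (hmass : ∀ x ∈ U,
      pd 0 (fun y => ρ y * u 0 y) x + pd 1 (fun y => ρ y * u 1 y) x
        + pd 2 (fun y => ρ y * u 2 y) x = 0)
    (hmom : ∀ i : Fin 3, ∀ x ∈ U,
      pd 0 (fun y => ρ y * u i y * u 0 y) x + pd 1 (fun y => ρ y * u i y * u 1 y) x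
        + pd 2 (fun y => ρ y * u i y * u 2 y) x + pd i (fun y => p (ρ y)) x = 0)
    {β₂ β₃ B G W : (Fin 3 → ℝ) → ℝ}
    (hβ₂ : β₂ = fun y => u 1 y / u 0 y) (hβ₃ : β₃ = fun y => u 2 y / u 0 y)
    (hB : B = fun y => (u 0 y ^ 2 + u 1 y ^ 2 + u 2 y ^ 2) / 2 + h (ρ y))
    (hG : G = fun y => 1 + β₂ y ^ 2 + β₃ y ^ 2)
    (hW : W = fun y => pd 1 β₃ y - pd 2 β₂ y + β₃ y * pd 0 β₂ y - β₂ y * pd 0 β₃ y) :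
    (∀ x ∈ U,
      Dop β₂ β₃ (fun y => W y / (ρ y * G y)) x
        + c2 (ρ x) / (2 * ρ x ^ 2 * (B x - h (ρ x)) ^ 2) *
          ((pd 1 ρ x * pd 2 B x - pd 2 ρ x * pd 1 B x)
            + β₂ x * (pd 2 ρ x * pd 0 B x - pd 0 ρ x * pd 2 B x)
            + β₃ x * (pd 0 ρ x * pd 1 B x - pd 1 ρ x * pd 0 B x)) = 0) ∧
    ((∃ B₀ : ℝ, ∀ x ∈ U, B x = B₀) →
      ∀ x ∈ U, Dop β₂ β₃ (fun y => W y / (ρ y * G y)) x = 0) := by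
  set v : (Fin 3 → ℝ) → Fin 3 → ℝ := fun y i => u i y
  have hv : ContDiffOn ℝ 2 v U := contDiffOn_pi.2 hu
  have hflow : IsSteadyEulerFlow U ρ (fun y => p (ρ y)) v := by
    constructor <;> simp only [divergence, Fin.sum_univ_three]
    exacts [hmass, fun x hx i => hmom i x hx]
  have hBv : B = bernoulliFunction (fun y => h (ρ y)) v := by
    simp [hB, funext_iff, bernoulliFunction, Matrix.vec3_dotProduct, v, sq]
  have hslopes : ∀ y ∈ U, ![1, β₂ y, β₃ y] = (u 0 y)⁻¹ • v y := fun y hy => by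
    simp only [hβ₂, hβ₃]
    exact slopes_eq_smul (a := v y) (hu1 y hy)
  have hratio : ∀ y ∈ U, W y / (ρ y * G y) = streamwiseVorticity ρ v y := fun y hy => by
    have hvd := (hv.contDiffAt (hU.mem_nhds hy)).differentiableAt two_ne_zero
    rw [hW, hG, streamwiseVorticity_eq_of_slopes (v := v) hvd (hu1 y hy)
      (eventually_of_mem (hU.mem_nhds hy) hslopes)]
  have htransport : ∀ x ∈ U, Dop β₂ β₃ (fun y => W y / (ρ y * G y)) x =
      -(c2 (ρ x) / (2 * ρ x ^ 2 * (B x - h (ρ x)) ^ 2) *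
        (![1, β₂ x, β₃ x] ⬝ᵥ grad ρ x ⨯₃ grad B x)) := fun x hx => by
    rw [dop_eq_dotProduct_grad, grad_congr (eventuallyEq_of_mem (hU.mem_nhds hx) hratio),
      hslopes x hx, smul_dotProduct, smul_dotProduct, hBv,
      hflow.dotProduct_grad_streamwiseVorticity hU hx hp hh hρ hρpos hv
        fun h0 => hu1 x hx (congrFun h0 0), smul_neg, mul_smul_comm]
  refine ⟨fun x hx => ?_, fun ⟨B₀, hB₀⟩ x hx => ?_⟩
  · rw [htransport x hx, cross_apply, Matrix.vec3_dotProduct]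
    simp only [grad, Matrix.cons_val]
    ring
  · rw [htransport x hx, grad_congr (eventuallyEq_of_mem (hU.mem_nhds hx) hB₀), grad_const]
    simp

/-- Theorem 3.1: the transport equation (3.10) for `W/(ρG)`;
in particular `D(W/(ρG)) = 0` when the Bernoulli function is constant. -/
theorem transport_equation_for_W
    (U : Set (Fin 3 → ℝ)) (hU : IsOpen U) (γ : ℝ) (hγ1 : 1 < γ) (hγ3 : γ < 3)
    (ρ : (Fin 3 → ℝ) → ℝ) (u : Fin 3 → (Fin 3 → ℝ) → ℝ)
    (hρ : ContDiffOn ℝ (⊤ : ℕ∞) ρ U) (hu : ∀ i, ContDiffOn ℝ (⊤ : ℕ∞) (u i) U)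
    (hρpos : ∀ x ∈ U, 0 < ρ x) (hu1pos : ∀ x ∈ U, 0 < u 0 x)
    (hmass : ∀ x ∈ U,
      pd 0 (fun y => ρ y * u 0 y) x + pd 1 (fun y => ρ y * u 1 y) x
        + pd 2 (fun y => ρ y * u 2 y) x = 0)
    (hmom : ∀ i : Fin 3, ∀ x ∈ U,
      pd 0 (fun y => ρ y * u i y * u 0 y) x + pd 1 (fun y => ρ y * u i y * u 1 y) x
        + pd 2 (fun y => ρ y * u i y * u 2 y) x + pd i (fun y => ρ y ^ γ / γ) x = 0)
    (β₂ β₃ B G W : (Fin 3 → ℝ) → ℝ)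
    (hβ₂ : β₂ = fun y => u 1 y / u 0 y) (hβ₃ : β₃ = fun y => u 2 y / u 0 y)
    (hB : B = fun y => (u 0 y ^ 2 + u 1 y ^ 2 + u 2 y ^ 2) / 2 + ρ y ^ (γ - 1) / (γ - 1))
    (hG : G = fun y => 1 + β₂ y ^ 2 + β₃ y ^ 2)
    (hW : W = fun y => pd 1 β₃ y - pd 2 β₂ y + β₃ y * pd 0 β₂ y - β₂ y * pd 0 β₃ y) :
    (∀ x ∈ U,
      Dop β₂ β₃ (fun y => W y / (ρ y * G y)) x
        + ρ x ^ (γ - 1) / (2 * ρ x ^ 2 * (B x - ρ x ^ (γ - 1) / (γ - 1)) ^ 2) *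
          ((pd 1 ρ x * pd 2 B x - pd 2 ρ x * pd 1 B x)
            + β₂ x * (pd 2 ρ x * pd 0 B x - pd 0 ρ x * pd 2 B x)
            + β₃ x * (pd 0 ρ x * pd 1 B x - pd 1 ρ x * pd 0 B x)) = 0) ∧
    ((∃ B₀ : ℝ, ∀ x ∈ U, B x = B₀) →
      ∀ x ∈ U, Dop β₂ β₃ (fun y => W y / (ρ y * G y)) x = 0) :=
  transport_equation_for_W_general (p := fun s => s ^ γ / γ)
    (h := fun s => s ^ (γ - 1) / (γ - 1)) (c2 := fun s => s ^ (γ - 1)) hU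
    (fun _ => hasDerivAt_rpow_div_self (zero_lt_one.trans hγ1).ne')
    (fun s hs => Real.rpow_sub_one hs.ne' (γ - 1) ▸
      hasDerivAt_rpow_div_self (sub_pos.2 hγ1).ne' hs)
    (hρ.differentiableOn (by simp)) (fun i => (hu i).of_le (WithTop.coe_le_coe.2 le_top)) hρpos
    (fun x hx => (hu1pos x hx).ne') hmass hmom hβ₂ hβ₃ hB hG hW
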